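/- Let V be a finite set and F a finite family of n three-element subsets of V such that every element of V belongs to exactly 6 members of F and every pair of distinct elements of V belongs to at most 2 members of F. Then for every pairing p of V there exists a transversal S of p such that at least n/16 members of F are disjoint from S; equivalently, the number of e ∈ F with e ∩ S ≠ ∅ is at most 15n/16. -/

import Mathlib

open Finset

/-- A pairing has a transversal. -/
lemma exists_transversal {V : Type*} [Fintype V] [DecidableEq V]
    (p : V → V) (hp_inv : ∀ v, p (p v) = v) (hp_ne : ∀ v, p v ≠ v) :
    ∃ S : Finset V, ∀ v, v ∈ S ↔ p v ∉ S := by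
  let f := Fintype.equivFin V
  refine ⟨univ.filter (fun v => f v < f (p v)), fun v => ?_⟩
  have h : f (p v) ≠ f v := fun h => hp_ne v (f.injective h)
  simp only [mem_filter, mem_univ, true_and, hp_inv, not_lt]
  exact ⟨le_of_lt, fun h' => lt_of_le_of_ne h' h.symm⟩

/-- A triple containing no pair is missed by at least an eighth of the transversals. -/
lemma good_triple {V : Type*} [Fintype V] [DecidableEq V]
    (p : V → V) (hp_inv : ∀ v, p (p v) = v)
    (e : Finset V) (he : e.card = 3) (hgood : ∀ v ∈ e, p v ∉ e)
    (T : Finset (Finset V)) (hT : ∀ S, S ∈ T ↔ ∀ v, v ∈ S ↔ p v ∉ S) :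
    T.card ≤ 8 * (T.filter (fun S => e ∩ S = ∅)).card := by
  have h1 : T.card = ∑ U ∈ e.powerset, (T.filter (fun S => e ∩ S = U)).card :=
    card_eq_sum_card_fiberwise (fun S _ => by simp)
  have h2 : ∀ U ∈ e.powerset, (T.filter (fun S => e ∩ S = U)).card ≤
      (T.filter (fun S => e ∩ S = ∅)).card := by
    intro U hU
    rw [mem_powerset] at hU
    have hW : ∀ v, v ∈ U ∪ U.image p ↔ (v ∈ U ∨ p v ∈ U) := by
      intro v
      simp only [mem_union, mem_image]
      constructor
      · rintro (h | ⟨a, ha, rfl⟩)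
        · exact Or.inl h
        · right; rwa [hp_inv]
      · rintro (h | h)
        · exact Or.inl h
        · exact Or.inr ⟨_, h, hp_inv v⟩
    refine card_le_card_of_injOn (fun S => symmDiff S (U ∪ U.image p)) ?_
      (fun a _ b _ h => symmDiff_left_injective _ h)
    intro S hS
    simp only [coe_filter, Set.mem_setOf_eq, hT] at hS ⊢
    obtain ⟨hS1, hS2⟩ := hS
    constructor
    · intro v
      have := hS1 v
      simp only [mem_symmDiff, hW, hp_inv]
      tauto
    · ext v
      have h3 : v ∈ e → (v ∈ S ↔ v ∈ U) := by
        intro hv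
        rw [← hS2]; simp [hv]
      have h4 : v ∈ e → p v ∉ U := fun hv h => hgood v hv (hU h)
      simp only [mem_inter, mem_symmDiff, hW, notMem_empty, iff_false]
      tauto
  have h5 := sum_le_sum h2
  rw [sum_const, card_powerset, he] at h5
  rw [h1]
  simpa using h5

/-- Triangle game on the triangular grid (`k = 3`, `ℓ = 6`, `q = 2`), threshold `s = 1`:
for every pairing `p` there is a transversal `S` such that at least `n/16` members of `F`
are disjoint from `S`; equivalently, at most `15n/16` members of `F` meet `S`. -/
theorem triangle_s1_pairing_upper {V : Type*} [Fintype V] [DecidableEq V]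
    (n : ℕ) (F : Finset (Finset V)) (hn : F.card = n)
    (hF : ∀ e ∈ F, e.card = 3)
    (hdeg : ∀ v : V, (F.filter (fun e => v ∈ e)).card = 6)
    (hpair : ∀ u v : V, u ≠ v → (F.filter (fun e => u ∈ e ∧ v ∈ e)).card ≤ 2)
    (p : V → V) (hp_inv : ∀ v, p (p v) = v) (hp_ne : ∀ v, p v ≠ v) :
    ∃ S : Finset V, (∀ v, v ∈ S ↔ p v ∉ S) ∧
      n ≤ 16 * (F.filter (fun e => e ∩ S = ∅)).card ∧
      16 * (F.filter (fun e => (e ∩ S).Nonempty)).card ≤ 15 * n := by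
  have hsplit : ∀ S : Finset V, (F.filter (fun e => e ∩ S = ∅)).card +
      (F.filter (fun e => (e ∩ S).Nonempty)).card = n := by
    intro S
    rw [← hn, ← card_filter_add_card_filter_not (s := F) (fun e => e ∩ S = ∅)]
    simp only [nonempty_iff_ne_empty, ne_eq]
  suffices h : ∃ S : Finset V, (∀ v, v ∈ S ↔ p v ∉ S) ∧
      n ≤ 16 * (F.filter (fun e => e ∩ S = ∅)).card by
    obtain ⟨S, h1, h2⟩ := h
    have := hsplit S
    exact ⟨S, h1, h2, by omega⟩
  -- degree count
  have hV : 6 * Fintype.card V = 3 * n := by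
    have h := sum_card_bipartiteAbove_eq_sum_card_bipartiteBelow
      (s := (univ : Finset V)) (t := F) (fun v e => v ∈ e)
    simp only [bipartiteAbove, bipartiteBelow, hdeg] at h
    have h' : ∑ e ∈ F, (univ.filter (fun v => v ∈ e)).card = ∑ e ∈ F, 3 :=
      sum_congr rfl (fun e he => by simpa using hF e he)
    rw [h'] at h
    simp only [sum_const, smul_eq_mul, card_univ, hn] at h
    omega
  -- few bad triples
  have hbad : 2 * (F.filter (fun e => ¬ ∀ v ∈ e, p v ∉ e)).card ≤ n := by
    have h := sum_card_bipartiteAbove_eq_sum_card_bipartiteBelow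
      (s := (univ : Finset V)) (t := F) (fun v e => v ∈ e ∧ p v ∈ e)
    simp only [bipartiteAbove, bipartiteBelow] at h
    have hle : ∑ v : V, (F.filter (fun e => v ∈ e ∧ p v ∈ e)).card ≤ ∑ v : V, 2 :=
      sum_le_sum (fun v _ => hpair v (p v) (hp_ne v).symm)
    have hge : ∑ e ∈ F.filter (fun e => ¬ ∀ v ∈ e, p v ∉ e), 2 ≤
        ∑ e ∈ F, (univ.filter (fun v => v ∈ e ∧ p v ∈ e)).card := by
      refine le_trans (sum_le_sum (fun e he => ?_))
        (sum_le_sum_of_subset (filter_subset _ _))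
      simp only [mem_filter] at he
      obtain ⟨_, he⟩ := he
      push Not at he
      obtain ⟨v, hv, hpv⟩ := he
      rw [← card_pair (hp_ne v)]
      apply card_le_card
      intro w hw
      simp only [mem_insert, mem_singleton] at hw
      rcases hw with rfl | rfl <;> simp [hv, hpv, hp_inv]
    simp only [sum_const, smul_eq_mul, card_univ] at hle hge
    omega
  have hgood : n ≤ 2 * (F.filter (fun e => ∀ v ∈ e, p v ∉ e)).card := by
    have := card_filter_add_card_filter_not (s := F) (fun e => ∀ v ∈ e, p v ∉ e)
    omega
  let T : Finset (Finset V) := univ.filter (fun S => ∀ v, v ∈ S ↔ p v ∉ S)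
  have hT : ∀ S, S ∈ T ↔ ∀ v, v ∈ S ↔ p v ∉ S := fun S => by simp [T]
  have hTne : T.Nonempty := by
    obtain ⟨S, hS⟩ := exists_transversal p hp_inv hp_ne
    exact ⟨S, (hT S).2 hS⟩
  have hdc := sum_card_bipartiteAbove_eq_sum_card_bipartiteBelow
      (s := T) (t := F) (fun S e => e ∩ S = ∅)
  simp only [bipartiteAbove, bipartiteBelow] at hdc
  have hlow : ∑ e ∈ F.filter (fun e => ∀ v ∈ e, p v ∉ e), T.card ≤
      8 * ∑ e ∈ F, (T.filter (fun S => e ∩ S = ∅)).card := by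
    rw [mul_sum]
    refine le_trans (sum_le_sum (fun e he => ?_))
      (sum_le_sum_of_subset (filter_subset _ _))
    rw [mem_filter] at he
    exact good_triple p hp_inv e (hF e he.1) he.2 T hT
  rw [sum_const, smul_eq_mul, ← hdc] at hlow
  have hfin : ∑ S ∈ T, n ≤ ∑ S ∈ T, 16 * (F.filter (fun e => e ∩ S = ∅)).card := by
    rw [sum_const, smul_eq_mul, ← mul_sum]
    have := Nat.mul_le_mul_left T.card hgood
    linarith
  obtain ⟨S, hS, h⟩ := exists_le_of_sum_le hTne hfin
  exact ⟨S, (hT S).1 hS, h⟩
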